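/- arXiv:1704.05667 — 2 statements merged into one kernel-verified Lean document; each statement's English description precedes it below -/
import Mathlib

section
/- Let w₀, w₂ ∈ ℂ with w₀ ≠ 0, w₀^N ≠ 1 and w₂^N = 1 − w₀^{−N}, and define ψ : ℂ → ℂ by ψ(u) = Σ_{i=0}^{N−1} u^i ∏_{j=1}^{i} (−q^{−1}w₂)/(1 − w₀^{−1}q^{2j}) (empty products equal 1). Then for every i = 0, 1, …, N−1 one has ψ(−q^{2i}) = (∏_{j=1}^{i} (w₀ − q^{2j−3}w₀w₂)) · ψ(−1). -/
open Finset

/-!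
Write `(a; p)ₙ = ∏_{j<n} (1 - a pʲ)`. With `p = q²`, `x = w₀⁻¹` and `z = -q⁻¹ w₂ u`, the number
`ψ(u)` is the partial sum `F(z) = ∑_{n<N} tₙ`, where `tₙ = zⁿ / (xp; p)ₙ`. Since
`tₙ₊₁ (1 - x pⁿ⁺¹) = z tₙ`, the sum `F(z) - x F(pz) = ∑_{n<N} tₙ (1 - x pⁿ)` equals `z F(z)` up to
the boundary terms `(1 - x) - t_N (1 - x p^N)`. As `p` is a primitive `N`-th root of unity,
`(xp; p)_N = 1 - x^N`, and the condition on `w₂` says that `t_N = 1` whenever `u^N = -1`. The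
boundary terms then cancel and leave `x F(pz) = (1 - z) F(z)`, which is iterated starting from
`u = -1`.
-/

section CommRing

variable {R : Type*} [CommRing R]

/-- The finite `q`-Pochhammer symbol `(a; p)ₙ = (1 - a)(1 - a p) ⋯ (1 - a pⁿ⁻¹)`. -/
def qPochhammer (a p : R) (n : ℕ) : R :=
  ∏ j ∈ range n, (1 - a * p ^ j)

theorem qPochhammer_zero (a p : R) : qPochhammer a p 0 = 1 :=
  prod_range_zero _

theorem qPochhammer_succ (a p : R) (n : ℕ) :
    qPochhammer a p (n + 1) = qPochhammer a p n * (1 - a * p ^ n) :=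
  prod_range_succ _ n

theorem one_sub_mul_pow_ne_zero_of_qPochhammer_ne_zero {a p : R} {n j : ℕ}
    (h : qPochhammer a p n ≠ 0) (hj : j < n) : 1 - a * p ^ j ≠ 0 :=
  fun hzero => h (prod_eq_zero (mem_range.mpr hj) hzero)

theorem qPochhammer_eq_one_sub_pow_of_isPrimitiveRoot [IsDomain R] {p : R} {N : ℕ}
    (hp : IsPrimitiveRoot p N) (hN : 0 < N) (a : R) : qPochhammer a p N = 1 - a ^ N := by
  have factorization := congrArg (Polynomial.eval 1) (X_pow_sub_C_eq_prod hp hN (rfl : a ^ N = _))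
  simpa [Polynomial.eval_prod, qPochhammer, mul_comm] using factorization.symm

end CommRing

section Field

variable {K : Type*} [Field K] {N : ℕ} {p x z : K}

/-- The sum of the first `N` terms of the basic hypergeometric series
`₂φ₁(p, 0; xp; p, z) = ∑ₙ zⁿ / (xp; p)ₙ`. It expresses the function `ψ` with `p = q²`, `x = w₀⁻¹`
and `z = -q⁻¹ w₂ u`. Terms with `(xp; p)ₙ = 0` count as `0`. -/
def qPochhammerSum (N : ℕ) (p x z : K) : K :=
  ∑ n ∈ range N, z ^ n / qPochhammer (x * p) p n

theorem pow_succ_div_qPochhammer_mul {n : ℕ} (h : 1 - x * p ^ (n + 1) ≠ 0) :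
    z ^ (n + 1) / qPochhammer (x * p) p (n + 1) * (1 - x * p ^ (n + 1)) =
      z * (z ^ n / qPochhammer (x * p) p n) := by
  rw [qPochhammer_succ, mul_assoc x, ← pow_succ', ← div_div, div_mul_cancel₀ _ h, pow_succ',
    mul_div_assoc]

theorem qPochhammerSum_sub_mul_qPochhammerSum :
    qPochhammerSum N p x z - x * qPochhammerSum N p x (p * z) =
      ∑ n ∈ range N, z ^ n / qPochhammer (x * p) p n * (1 - x * p ^ n) := by
  rw [qPochhammerSum, qPochhammerSum, mul_sum, ← sum_sub_distrib]
  exact sum_congr rfl fun n _ => by ring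

theorem qPochhammerSum_functional_equation (h : qPochhammer (x * p) p N ≠ 0) :
    qPochhammerSum N p x z - x * qPochhammerSum N p x (p * z) =
      z * qPochhammerSum N p x z + (1 - x) -
        z ^ N / qPochhammer (x * p) p N * (1 - x * p ^ N) := by
  have shifted_sum : ∑ n ∈ range N,
      z ^ (n + 1) / qPochhammer (x * p) p (n + 1) * (1 - x * p ^ (n + 1)) =
        z * qPochhammerSum N p x z := by
    rw [qPochhammerSum, mul_sum]
    refine sum_congr rfl fun n hn => pow_succ_div_qPochhammer_mul ?_
    rw [pow_succ', ← mul_assoc]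
    exact one_sub_mul_pow_ne_zero_of_qPochhammer_ne_zero h (mem_range.mp hn)
  rw [qPochhammerSum_sub_mul_qPochhammerSum, eq_sub_iff_add_eq, ← sum_range_succ,
    sum_range_succ', shifted_sum]
  simp [qPochhammer_zero]

theorem mul_qPochhammerSum_mul (hp : IsPrimitiveRoot p N) (hN : 0 < N) (hx : x ^ N ≠ 1)
    (hz : z ^ N = 1 - x ^ N) :
    x * qPochhammerSum N p x (p * z) = (1 - z) * qPochhammerSum N p x z := by
  have hden : qPochhammer (x * p) p N = 1 - x ^ N := by
    rw [qPochhammer_eq_one_sub_pow_of_isPrimitiveRoot hp hN, mul_pow, hp.pow_eq_one, mul_one]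
  have hne : 1 - x ^ N ≠ 0 := sub_ne_zero.mpr hx.symm
  have functional_equation := qPochhammerSum_functional_equation (z := z) (hden ▸ hne)
  rw [hden, hz, div_self hne, hp.pow_eq_one] at functional_equation
  linear_combination -functional_equation

theorem pow_mul_qPochhammerSum_pow_mul (hp : IsPrimitiveRoot p N) (hN : 0 < N) (hx : x ^ N ≠ 1)
    (hz : z ^ N = 1 - x ^ N) (i : ℕ) :
    x ^ i * qPochhammerSum N p x (p ^ i * z) = qPochhammer z p i * qPochhammerSum N p x z := by
  induction i with
  | zero => simp [qPochhammer_zero]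
  | succ i ih =>
    have hzi : (p ^ i * z) ^ N = 1 - x ^ N := by
      rw [mul_pow, pow_right_comm, hp.pow_eq_one, one_pow, one_mul, hz]
    calc x ^ (i + 1) * qPochhammerSum N p x (p ^ (i + 1) * z)
        = x ^ i * (x * qPochhammerSum N p x (p * (p ^ i * z))) := by ring_nf
      _ = (1 - p ^ i * z) * (x ^ i * qPochhammerSum N p x (p ^ i * z)) := by
        rw [mul_qPochhammerSum_mul hp hN hx hzi, mul_left_comm]
      _ = qPochhammer z p (i + 1) * qPochhammerSum N p x z := by
        rw [ih, qPochhammer_succ]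
        ring

theorem sum_pow_mul_prod_div_eq_qPochhammerSum (q x c u : K) :
    ∑ n ∈ range N, u ^ n * ∏ j ∈ range n, c / (1 - x * q ^ (2 * (j + 1))) =
      qPochhammerSum N (q ^ 2) x (c * u) := by
  refine sum_congr rfl fun n _ => ?_
  have hden : ∏ j ∈ range n, (1 - x * q ^ (2 * (j + 1))) = qPochhammer (x * q ^ 2) (q ^ 2) n :=
    prod_congr rfl fun j _ => by ring
  rw [prod_div_distrib, hden, prod_const, card_range]
  ring

theorem prod_sub_zpow_mul_eq_pow_mul_qPochhammer {q : K} (hq : q ≠ 0) (w₀ w₂ : K) (i : ℕ) :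
    ∏ j ∈ range i, (w₀ - q ^ (2 * (j : ℤ) - 1) * w₀ * w₂) =
      w₀ ^ i * qPochhammer (q⁻¹ * w₂) (q ^ 2) i := by
  have hfactor (j : ℕ) : w₀ - q ^ (2 * (j : ℤ) - 1) * w₀ * w₂ =
      w₀ * (1 - q⁻¹ * w₂ * (q ^ 2) ^ j) := by
    have hzpow : q ^ (2 * (j : ℤ) - 1) = (q ^ 2) ^ j * q⁻¹ := by
      rw [zpow_sub_one₀ hq, ← pow_mul]
      norm_cast
    rw [hzpow]
    ring
  simp only [hfactor, prod_mul_distrib, prod_const, card_range, qPochhammer]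

theorem psi_scalar_eigenvalues_general (hNodd : Odd N) {q : K} (hq : IsPrimitiveRoot q N)
    {w₀ w₂ : K} (hw₀ : w₀ ≠ 0) (hw₀N : w₀ ^ N ≠ 1) (hw₂ : w₂ ^ N = 1 - w₀⁻¹ ^ N) {ψ : K → K}
    (hψ : ∀ u, ψ u = ∑ i ∈ range N,
      u ^ i * ∏ j ∈ range i, (-q⁻¹ * w₂) / (1 - w₀⁻¹ * q ^ (2 * (j + 1)))) (i : ℕ) :
    ψ (-(q ^ (2 * i))) =
      (∏ j ∈ range i, (w₀ - q ^ (2 * (j : ℤ) - 1) * w₀ * w₂)) * ψ (-1) := by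
  have hq2 : IsPrimitiveRoot (q ^ 2) N := hq.pow_of_coprime 2 (Nat.coprime_two_left.mpr hNodd)
  have hx : w₀⁻¹ ^ N ≠ 1 := by rwa [inv_pow, ne_eq, inv_eq_one]
  have hz : (q⁻¹ * w₂) ^ N = 1 - w₀⁻¹ ^ N := by
    rw [mul_pow, inv_pow, hq.pow_eq_one, inv_one, one_mul, hw₂]
  have hψ_neg (v : K) : ψ (-v) = qPochhammerSum N (q ^ 2) w₀⁻¹ (v * (q⁻¹ * w₂)) := by
    rw [hψ, sum_pow_mul_prod_div_eq_qPochhammerSum]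
    ring_nf
  have hiter := pow_mul_qPochhammerSum_pow_mul hq2 hNodd.pos hx hz i
  rw [hψ_neg, hψ_neg, one_mul, pow_mul,
    prod_sub_zpow_mul_eq_pow_mul_qPochhammer (hq.ne_zero hNodd.pos.ne'), mul_assoc, ← hiter,
    inv_pow, mul_inv_cancel_left₀ (pow_ne_zero i hw₀)]

end Field

/-- The scalar function `ψ(u) = Σ_{i=0}^{N−1} u^i ∏_{j=1}^{i} (−q⁻¹w₂)/(1 − w₀⁻¹q^{2j})`
(the paper's `Ψ_w` evaluated at scalars, normalization omitted) satisfies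
`ψ(−q^{2i}) = (∏_{j=1}^{i} (w₀ − q^{2j−3}w₀w₂)) · ψ(−1)` for `0 ≤ i ≤ N−1`. -/
theorem psi_scalar_eigenvalues (N : ℕ) (hN : 3 ≤ N) (hNodd : Odd N)
    (q : ℂ) (hq : IsPrimitiveRoot q N)
    (w₀ w₂ : ℂ) (hw₀ : w₀ ≠ 0) (hw₀N : w₀ ^ N ≠ 1) (hw₂ : w₂ ^ N = 1 - (w₀⁻¹) ^ N)
    (ψ : ℂ → ℂ)
    (hψ : ∀ u : ℂ, ψ u = ∑ i ∈ Finset.range N,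
      u ^ i * ∏ j ∈ Finset.range i, (-q⁻¹ * w₂) / (1 - w₀⁻¹ * q ^ (2 * (j + 1)))) :
    ∀ i < N, ψ (-(q ^ (2 * i))) =
      (∏ j ∈ Finset.range i, (w₀ - q ^ (2 * (j : ℤ) - 1) * w₀ * w₂)) * ψ (-1) :=
  fun i _ => psi_scalar_eigenvalues_general hNodd hq hw₀ hw₀N hw₂ hψ i
end

section
/- Let w₀, w₂ ∈ ℂ with w₀ ≠ 0 and w₀^N ≠ 1. Then the operator ℒ = Ψ_w(−A₀A₁ ⊗ A₁^{−1}) ∘ Υ satisfies (A₂ ⊗ A₁) ∘ ℒ ∘ (A₁ ⊗ A₀) = ℒ in End(ℂ^N ⊗ ℂ^N). -/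
open Finset Kronecker

/-- `A₀ e_k = q^{2k} e_k` on `ℂ^N` (basis indexed by `ZMod N`). -/
noncomputable def A0 (N : ℕ) (q : ℂ) : Matrix (ZMod N) (ZMod N) ℂ :=
  Matrix.diagonal fun k => q ^ (2 * k.val)

/-- `A₁ e_k = e_{k+1}`. -/
noncomputable def A1 (N : ℕ) : Matrix (ZMod N) (ZMod N) ℂ :=
  fun j k => if j = k + 1 then 1 else 0

/-- `A₂ e_k = q^{1−2k} e_{k−1}`. -/
noncomputable def A2 (N : ℕ) (q : ℂ) : Matrix (ZMod N) (ZMod N) ℂ :=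
  fun j k => if j = k - 1 then q ^ ((1 : ℤ) - 2 * (k.val : ℤ)) else 0

/-- The operator `Ψ_w(U)` (with the scalar normalization `h(w₀)` omitted). -/
noncomputable def Psi (N : ℕ) (q w₀ w₂ : ℂ) {A : Type*} [Ring A] [Algebra ℂ A] (U : A) : A :=
  ∑ i ∈ Finset.range N,
    (∏ j ∈ Finset.range i, (-q⁻¹ * w₂) / (1 - w₀⁻¹ * q ^ (2 * (j + 1)))) • U ^ i

/-- `Υ := (1/N) Σ_{i,j=0}^{N−1} q^{−2ij−j} A₀^i ⊗ (A₁A₀)^{−j}` on `ℂ^N ⊗ ℂ^N`. -/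
noncomputable def Ups (N : ℕ) [NeZero N] (q : ℂ) :
    Matrix (ZMod N × ZMod N) (ZMod N × ZMod N) ℂ :=
  (N : ℂ)⁻¹ • ∑ i ∈ Finset.range N, ∑ j ∈ Finset.range N,
    (q ^ (-(2 * (i : ℤ) * (j : ℤ) + (j : ℤ)))) • ((A0 N q ^ i) ⊗ₖ ((A1 N * A0 N q)⁻¹ ^ j))

/-- `ℒ := Ψ_w(−A₀A₁ ⊗ A₁⁻¹) ∘ Υ`, the transposed basic matrix dilogarithm (up to the
scalar normalization `h(w₀)`). -/
noncomputable def Ldil (N : ℕ) [NeZero N] (q w₀ w₂ : ℂ) :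
    Matrix (ZMod N × ZMod N) (ZMod N × ZMod N) ℂ :=
  Psi N q w₀ w₂ (-((A0 N q * A1 N) ⊗ₖ (A1 N)⁻¹)) * Ups N q

/-!
The operators satisfy the cyclic relations `A₀ A₁ = q² A₁ A₀`, `A₂ A₀ = q² A₀ A₂` and
`A₂ A₁ A₀ = q⁻¹ = A₁ A₀ A₂`. Hence `(A₁ A₀)⁻¹ = q A₂`, and `Υ` takes the form
`N⁻¹ ∑ q^{-2ij} A₀^i ⊗ A₂^j`, whose summand is `N`-periodic in `i` and in `j`. The map
`Z ↦ (A₂ ⊗ A₁) Z (A₁ ⊗ A₀)` sends the summand at `(i + 1, j + 1)` to the one at `(i, j)`, so it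
fixes `Υ`. Moreover `A₂ ⊗ A₁` commutes with `U = -A₀ A₁ ⊗ A₁⁻¹`, so it passes through every element
of `ℂ[U]`, in particular through `Ψ_w(U)`.
-/

lemma sum_range_add_one_eq_sum_range {M : Type*} [AddCommMonoid M] {N : ℕ} {f : ℕ → M}
    (h : f N = f 0) : ∑ i ∈ range N, f (i + 1) = ∑ i ∈ range N, f i := by
  cases N with
  | zero => rfl
  | succ n => rw [sum_range_succ, h, sum_range_succ' f]

lemma ne_zero_of_pow_eq_one {M : Type*} [MonoidWithZero M] [Nontrivial M] {a : M} {n : ℕ}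
    [NeZero n] (h : a ^ n = 1) : a ≠ 0 :=
  (IsUnit.of_pow_eq_one h (NeZero.ne n)).ne_zero

lemma inv_sq_pow_mul_eq_one {G : Type*} [DivisionMonoid G] {a : G} {n : ℕ} (h : a ^ n = 1)
    (m : ℕ) : (a ^ 2)⁻¹ ^ (n * m) = 1 := by
  rw [pow_mul, inv_pow, pow_right_comm, h, one_pow, inv_one, one_pow]

lemma pow_two_mul_val_add_one {M : Type*} [CommMonoid M] {a : M} {n : ℕ} [NeZero n]
    (h : a ^ n = 1) (k : ZMod n) : a ^ (2 * (k + 1).val) = a ^ 2 * a ^ (2 * k.val) := by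
  have pow_val_add_one : a ^ (k + 1).val = a ^ k.val * a := by
    have map_add := (AddChar.zmodChar n h).map_add_eq_mul k (1 : ℕ)
    rwa [AddChar.zmodChar_apply', AddChar.zmodChar_apply, AddChar.zmodChar_apply, Nat.cast_one,
      pow_one] at map_add
  rw [mul_comm 2, pow_mul, pow_val_add_one, mul_comm 2 k.val, pow_mul, mul_pow, mul_comm]

lemma mul_pow_of_semiconjBy_smul {R A : Type*} [CommSemiring R] [Semiring A] [Algebra R A]
    {x : R} {a b : A} (h : SemiconjBy b (x • a) a) (n : ℕ) :
    (b * a) ^ n = x ^ n.choose 2 • (b ^ n * a ^ n) := by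
  induction n with
  | zero => simp
  | succ n ih =>
    have swap : a ^ n * b = x ^ n • (b * a ^ n) := by
      rw [← (h.pow_right n).eq, smul_pow, mul_smul_comm]
    calc (b * a) ^ (n + 1)
        = x ^ n.choose 2 • (b ^ n * (a ^ n * b) * a) := by
          rw [pow_succ, ih, smul_mul_assoc]
          simp only [mul_assoc]
      _ = (x ^ n.choose 2 * x ^ n) • (b ^ n * b * (a ^ n * a)) := by
          rw [swap, mul_smul_comm, smul_mul_assoc, smul_smul]
          simp only [mul_assoc]
      _ = x ^ (n + 1).choose 2 • (b ^ (n + 1) * a ^ (n + 1)) := by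
          rw [← pow_add, ← pow_succ, ← pow_succ, Nat.choose_succ_succ' n 1, Nat.choose_one_right,
            add_comm (n.choose 2)]

lemma Psi_mem_adjoin {A : Type*} [Ring A] [Algebra ℂ A] (N : ℕ) (q w₀ w₂ : ℂ) (U : A) :
    Psi N q w₀ w₂ U ∈ Algebra.adjoin ℂ {U} :=
  sum_mem fun i _ => Subalgebra.smul_mem _ (pow_mem (Algebra.self_mem_adjoin_singleton ℂ U) i) _

section Generators

variable {N : ℕ} [NeZero N] {q : ℂ}

lemma A0_mul_A1 (hq : q ^ N = 1) : A0 N q * A1 N = q ^ 2 • (A1 N * A0 N q) := by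
  ext j k
  rw [Matrix.smul_apply, A0, Matrix.diagonal_mul, Matrix.mul_diagonal, A1]
  split_ifs with h
  · rw [h, pow_two_mul_val_add_one hq, mul_one, one_mul, smul_eq_mul]
  · simp

lemma semiconjBy_A1_smul_A0 (hq : q ^ N = 1) : SemiconjBy (A1 N) (q ^ 2 • A0 N q) (A0 N q) := by
  rw [SemiconjBy, mul_smul_comm, A0_mul_A1 hq]

lemma A2_mul_A1_mul_A0 (hq : q ^ N = 1) : A2 N q * (A1 N * A0 N q) = q⁻¹ • 1 := by
  have hq0 := ne_zero_of_pow_eq_one hq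
  have A2_mul_A1_apply (j k : ZMod N) :
      (A2 N q * A1 N) j k = if j = k then q⁻¹ * (q ^ (2 * k.val))⁻¹ else 0 := by
    have scalar : q ^ ((1 : ℤ) - 2 * ((k + 1).val : ℤ)) = q⁻¹ * (q ^ (2 * k.val))⁻¹ := by
      have exponent : 2 * ((k + 1).val : ℤ) = (2 * (k + 1).val : ℕ) := by norm_cast
      rw [exponent, zpow_sub₀ hq0, zpow_one, zpow_natCast, pow_two_mul_val_add_one hq]
      field_simp
    simp only [Matrix.mul_apply, A1, A2, mul_ite, mul_one, mul_zero, sum_ite_eq', mem_univ,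
      if_true, add_sub_cancel_right, scalar]
  ext j k
  rw [← mul_assoc, A0, Matrix.mul_diagonal, A2_mul_A1_apply, Matrix.smul_apply, Matrix.one_apply]
  split_ifs <;> simp [hq0]

lemma smul_A2_mul_A1_mul_A0 (hq : q ^ N = 1) : q • A2 N q * (A1 N * A0 N q) = 1 := by
  rw [smul_mul_assoc, A2_mul_A1_mul_A0 hq, smul_inv_smul₀ (ne_zero_of_pow_eq_one hq)]

lemma inv_A1_mul_A0 (hq : q ^ N = 1) : (A1 N * A0 N q)⁻¹ = q • A2 N q :=
  Matrix.inv_eq_left_inv (smul_A2_mul_A1_mul_A0 hq)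

lemma A1_mul_A0_mul_A2 (hq : q ^ N = 1) : A1 N * A0 N q * A2 N q = q⁻¹ • 1 := by
  rw [eq_inv_smul_iff₀ (ne_zero_of_pow_eq_one hq), ← mul_smul_comm,
    mul_eq_one_comm.mp (smul_A2_mul_A1_mul_A0 hq)]

lemma A2_mul_A0 (hq : q ^ N = 1) : A2 N q * A0 N q = q ^ 2 • (A0 N q * A2 N q) := by
  have hq0 := ne_zero_of_pow_eq_one hq
  calc A2 N q * A0 N q
      = q • (A2 N q * A0 N q * (A1 N * A0 N q * A2 N q)) := by
        rw [A1_mul_A0_mul_A2 hq, mul_smul_comm, mul_one, smul_inv_smul₀ hq0]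
    _ = q • (A2 N q * (A0 N q * A1 N) * (A0 N q * A2 N q)) := by simp only [mul_assoc]
    _ = q ^ 2 • (A0 N q * A2 N q) := by
        rw [A0_mul_A1 hq, mul_smul_comm, A2_mul_A1_mul_A0 hq, smul_mul_assoc, smul_mul_assoc,
          one_mul, smul_comm q, smul_inv_smul₀ hq0]

lemma A0_pow_eq_one (hq : q ^ N = 1) : A0 N q ^ N = 1 := by
  rw [A0, Matrix.diagonal_pow, ← Matrix.diagonal_one]
  congr 1
  ext k
  rw [Pi.pow_apply, pow_right_comm, hq, one_pow]

lemma A1_pow_apply (n : ℕ) (j k : ZMod N) : (A1 N ^ n) j k = if j = k + n then 1 else 0 := by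
  induction n generalizing k with
  | zero => simp [Matrix.one_apply]
  | succ n ih => simp [pow_succ, Matrix.mul_apply, ih, A1, add_right_comm, add_assoc]

lemma A1_pow_eq_one : A1 N ^ N = 1 := by
  ext j k
  simp [A1_pow_apply, Matrix.one_apply]

lemma A1_mul_A0_pow_eq_one (hq : q ^ N = 1) : (A1 N * A0 N q) ^ N = 1 := by
  have scalar : (q ^ 2) ^ N.choose 2 = 1 := by
    rw [← pow_mul, mul_comm, Nat.choose_two_right, Nat.div_two_mul_two_of_even
      (Nat.even_mul_pred_self N), pow_mul, hq, one_pow]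
  rw [mul_pow_of_semiconjBy_smul (semiconjBy_A1_smul_A0 hq), scalar, A1_pow_eq_one,
    A0_pow_eq_one hq, one_smul, one_mul]

lemma A2_pow_eq_one (hq : q ^ N = 1) : A2 N q ^ N = 1 := by
  calc A2 N q ^ N = (q • A2 N q) ^ N := by rw [smul_pow, hq, one_smul]
    _ = 1 := by rw [← inv_A1_mul_A0 hq, Matrix.inv_pow', A1_mul_A0_pow_eq_one hq, inv_one]

lemma A2_mul_A0_pow_succ_mul_A1 (hq : q ^ N = 1) (i : ℕ) :
    A2 N q * A0 N q ^ (i + 1) * A1 N = ((q ^ 2) ^ (i + 1) * q⁻¹) • A0 N q ^ i := by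
  rw [mul_assoc, ← ((semiconjBy_A1_smul_A0 hq).pow_right (i + 1)).eq, smul_pow, mul_smul_comm,
    mul_smul_comm, pow_succ' (A0 N q), ← mul_assoc (A1 N), ← mul_assoc, A2_mul_A1_mul_A0 hq,
    smul_mul_assoc, one_mul, smul_smul]

lemma A1_mul_A2_pow_succ_mul_A0 (hq : q ^ N = 1) (j : ℕ) :
    A1 N * A2 N q ^ (j + 1) * A0 N q = ((q ^ 2) ^ (j + 1) * q⁻¹) • A2 N q ^ j := by
  have q_comm : SemiconjBy (A0 N q) (q ^ 2 • A2 N q) (A2 N q) := by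
    rw [SemiconjBy, mul_smul_comm, A2_mul_A0 hq]
  rw [mul_assoc, ← (q_comm.pow_right (j + 1)).eq, smul_pow, mul_smul_comm, mul_smul_comm,
    pow_succ' (A2 N q), ← mul_assoc, ← mul_assoc, A1_mul_A0_mul_A2 hq, smul_mul_assoc,
    one_mul, smul_smul]

lemma commute_A2_kronecker_A1 (hq : q ^ N = 1) :
    Commute (A2 N q ⊗ₖ A1 N) (-((A0 N q * A1 N) ⊗ₖ (A1 N)⁻¹)) := by
  have A1_det : IsUnit (A1 N).det :=
    (Matrix.isUnit_iff_isUnit_det _).mp (IsUnit.of_pow_eq_one A1_pow_eq_one (NeZero.ne N))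
  have first_factor : A2 N q * (A0 N q * A1 N) = A0 N q * A1 N * A2 N q := by
    rw [A0_mul_A1 hq, mul_smul_comm, smul_mul_assoc, A2_mul_A1_mul_A0 hq, A1_mul_A0_mul_A2 hq]
  refine Commute.neg_right ?_
  rw [Commute, SemiconjBy, ← Matrix.mul_kronecker_mul, ← Matrix.mul_kronecker_mul, first_factor,
    Matrix.mul_nonsing_inv _ A1_det, Matrix.nonsing_inv_mul _ A1_det]

end Generators

/-- The summand `q^{-2ij} A₀^i ⊗ A₂^j` of `N Υ`, after the substitution `(A₁ A₀)⁻¹ = q A₂`. -/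
noncomputable def upsSummand (N : ℕ) [NeZero N] (q : ℂ) (i j : ℕ) :
    Matrix (ZMod N × ZMod N) (ZMod N × ZMod N) ℂ :=
  (q ^ 2)⁻¹ ^ (i * j) • ((A0 N q ^ i) ⊗ₖ (A2 N q ^ j))

section Ups

variable {N : ℕ} [NeZero N] {q : ℂ}

lemma Ups_eq_sum_upsSummand (hq : q ^ N = 1) :
    Ups N q = (N : ℂ)⁻¹ • ∑ i ∈ range N, ∑ j ∈ range N, upsSummand N q i j := by
  have hq0 := ne_zero_of_pow_eq_one hq
  have scalar (i j : ℕ) :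
      q ^ (-(2 * (i : ℤ) * (j : ℤ) + (j : ℤ))) * q ^ j = (q ^ 2)⁻¹ ^ (i * j) := by
    rw [neg_add, zpow_add₀ hq0, zpow_neg _ (j : ℤ), zpow_natCast, mul_assoc,
      inv_mul_cancel₀ (pow_ne_zero j hq0), mul_one, inv_pow, ← pow_mul, zpow_neg, ← zpow_natCast]
    push_cast
    rw [mul_assoc]
  simp only [Ups, upsSummand, inv_A1_mul_A0 hq, smul_pow, Matrix.kronecker_smul, smul_smul, scalar]

lemma upsSummand_self_left (hq : q ^ N = 1) (j : ℕ) :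
    upsSummand N q N j = upsSummand N q 0 j := by
  rw [upsSummand, upsSummand, inv_sq_pow_mul_eq_one hq, A0_pow_eq_one hq, zero_mul,
    pow_zero, pow_zero]

lemma upsSummand_self_right (hq : q ^ N = 1) (i : ℕ) :
    upsSummand N q i N = upsSummand N q i 0 := by
  rw [upsSummand, upsSummand, mul_comm i, inv_sq_pow_mul_eq_one hq, A2_pow_eq_one hq, mul_zero,
    pow_zero, pow_zero]

lemma sum_upsSummand_succ_succ (hq : q ^ N = 1) :
    ∑ i ∈ range N, ∑ j ∈ range N, upsSummand N q (i + 1) (j + 1) =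
      ∑ i ∈ range N, ∑ j ∈ range N, upsSummand N q i j :=
  calc ∑ i ∈ range N, ∑ j ∈ range N, upsSummand N q (i + 1) (j + 1)
      = ∑ i ∈ range N, ∑ j ∈ range N, upsSummand N q (i + 1) j :=
        sum_congr rfl fun i _ => sum_range_add_one_eq_sum_range (upsSummand_self_right hq (i + 1))
    _ = ∑ i ∈ range N, ∑ j ∈ range N, upsSummand N q i j :=
        sum_range_add_one_eq_sum_range (f := fun i => ∑ j ∈ range N, upsSummand N q i j)
          (sum_congr rfl fun j _ => upsSummand_self_left hq j)

lemma A2_kronecker_A1_mul_upsSummand_succ_succ (hq : q ^ N = 1) (i j : ℕ) :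
    (A2 N q ⊗ₖ A1 N) * upsSummand N q (i + 1) (j + 1) * (A1 N ⊗ₖ A0 N q) =
      upsSummand N q i j := by
  have hq0 := ne_zero_of_pow_eq_one hq
  have scalar : (q ^ 2)⁻¹ ^ ((i + 1) * (j + 1)) *
      ((q ^ 2) ^ (i + 1) * q⁻¹) * ((q ^ 2) ^ (j + 1) * q⁻¹) = (q ^ 2)⁻¹ ^ (i * j) := by
    rw [inv_pow, inv_pow]
    field_simp
    ring
  rw [upsSummand, mul_smul_comm, smul_mul_assoc, ← Matrix.mul_kronecker_mul,
    ← Matrix.mul_kronecker_mul, A2_mul_A0_pow_succ_mul_A1 hq, A1_mul_A2_pow_succ_mul_A0 hq,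
    Matrix.smul_kronecker, Matrix.kronecker_smul, smul_smul, smul_smul, scalar, upsSummand]

lemma A2_kronecker_A1_mul_Ups_mul_A1_kronecker_A0 (hq : q ^ N = 1) :
    (A2 N q ⊗ₖ A1 N) * Ups N q * (A1 N ⊗ₖ A0 N q) = Ups N q := by
  calc (A2 N q ⊗ₖ A1 N) * Ups N q * (A1 N ⊗ₖ A0 N q)
      = (N : ℂ)⁻¹ • ∑ i ∈ range N, ∑ j ∈ range N,
          (A2 N q ⊗ₖ A1 N) * upsSummand N q (i + 1) (j + 1) * (A1 N ⊗ₖ A0 N q) := by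
        rw [Ups_eq_sum_upsSummand hq, ← sum_upsSummand_succ_succ hq]
        simp only [mul_smul_comm, smul_mul_assoc, mul_sum, sum_mul]
    _ = Ups N q := by
        simp only [A2_kronecker_A1_mul_upsSummand_succ_succ hq, Ups_eq_sum_upsSummand hq]

end Ups

theorem Ldil_X5_relation_general {N : ℕ} [NeZero N] {q : ℂ} (hq : q ^ N = 1)
    {P : Matrix (ZMod N × ZMod N) (ZMod N × ZMod N) ℂ}
    (hP : P ∈ Algebra.adjoin ℂ {-((A0 N q * A1 N) ⊗ₖ (A1 N)⁻¹)}) :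
    (A2 N q ⊗ₖ A1 N) * (P * Ups N q) * (A1 N ⊗ₖ A0 N q) = P * Ups N q := by
  have commute_P : Commute (A2 N q ⊗ₖ A1 N) P :=
    Algebra.commute_of_mem_adjoin_singleton_of_commute hP (commute_A2_kronecker_A1 hq)
  calc (A2 N q ⊗ₖ A1 N) * (P * Ups N q) * (A1 N ⊗ₖ A0 N q)
      = P * ((A2 N q ⊗ₖ A1 N) * Ups N q * (A1 N ⊗ₖ A0 N q)) := by
        rw [← mul_assoc, commute_P.eq, mul_assoc, mul_assoc, mul_assoc]
    _ = P * Ups N q := by rw [A2_kronecker_A1_mul_Ups_mul_A1_kronecker_A0 hq]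

/-- The intertwining relation for the diagonal generator `X₅`:
`(A₂ ⊗ A₁) ∘ ℒ ∘ (A₁ ⊗ A₀) = ℒ`. -/
theorem Ldil_X5_relation (N : ℕ) [NeZero N] (hN : 3 ≤ N) (hNodd : Odd N)
    (q : ℂ) (hq : IsPrimitiveRoot q N)
    (w₀ w₂ : ℂ) (hw₀ : w₀ ≠ 0) (hw₀N : w₀ ^ N ≠ 1) :
    (A2 N q ⊗ₖ A1 N) * Ldil N q w₀ w₂ * (A1 N ⊗ₖ A0 N q) = Ldil N q w₀ w₂ :=
  Ldil_X5_relation_general hq.pow_eq_one (Psi_mem_adjoin N q w₀ w₂ _)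
end
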